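/- For every word w in the free group F₂ on two generators there exists a polynomial P_w ∈ ℤ[s,t,u] in three variables such that for all x, y ∈ SL(2,ℂ) one has tr(w(x,y)) = P_w(tr x, tr y, tr(xy)). -/

import Mathlib

open Matrix

abbrev SL2C := Matrix.SpecialLinearGroup (Fin 2) ℂ

noncomputable def tr2 (x : SL2C) : ℂ := Matrix.trace (x : Matrix (Fin 2) (Fin 2) ℂ)

/-- The evaluation of a word `w` in the free group on two generators at a pair
of matrices `x y ∈ SL(2,ℂ)`. -/
noncomputable def wordEval (w : FreeGroup (Fin 2)) (x y : SL2C) : SL2C :=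
  FreeGroup.lift ![x, y] w

/-! By the Cayley–Hamilton theorem and its polarisation, the algebra generated by two `2 × 2`
matrices `X` and `Y` over the ring of coefficients `A = ℤ[tr X, tr Y, tr (XY), det X, det Y]` is
spanned as an `A`-module by `1, X, Y, XY`, whose traces lie in `A`. If `X` and `Y` have determinant
one, then `A = ℤ[tr X, tr Y, tr (XY)]` and `X⁻¹ = tr X - X`, so this algebra contains every word
in `X` and `Y`. This gives a polynomial for each single pair; the pair formed by *all* pairs, with
entries in a product ring, then gives one polynomial valid for all of them at once. -/

open Matrix.SpecialLinearGroup
open scoped MatrixGroups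

universe u

section CayleyHamilton

variable {R : Type*} [CommRing R] (X Y : Matrix (Fin 2) (Fin 2) R)

theorem adjugate_fin_two_eq_trace_smul_one_sub : adjugate X = trace X • 1 - X := by
  ext i j
  fin_cases i <;> fin_cases j <;> simp [adjugate_fin_two, trace_fin_two]

theorem mul_self_fin_two : X * X = trace X • X - det X • 1 := by
  have h := mul_adjugate X
  rw [adjugate_fin_two_eq_trace_smul_one_sub, mul_sub, mul_smul_comm, mul_one] at h
  rw [← h, sub_sub_cancel]

theorem mul_add_mul_swap_fin_two :
    X * Y + Y * X =
      trace Y • X + trace X • Y + (trace (X * Y) - trace X * trace Y) • 1 := by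
  ext i j
  fin_cases i <;> fin_cases j <;> simp [mul_apply, trace_fin_two] <;> ring

theorem sandwich_fin_two :
    Y * (X * Y) = trace (X * Y) • Y + det Y • X - (trace X * det Y) • 1 := by
  have hswap : Y * X =
      trace Y • X + trace X • Y + (trace (X * Y) - trace X * trace Y) • 1 - X * Y :=
    eq_sub_of_add_eq' (mul_add_mul_swap_fin_two X Y)
  rw [← mul_assoc, hswap]
  simp only [sub_mul, add_mul, smul_mul_assoc, one_mul, mul_assoc X Y Y, mul_self_fin_two Y,
    mul_sub, mul_smul_comm, mul_one]
  module

end CayleyHamilton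

section TraceRing

variable {R : Type*} [CommRing R] (X Y : Matrix (Fin 2) (Fin 2) R)

/-- The trace ring of a pair of `2 × 2` matrices: the ring of coefficients over which the algebra
generated by the pair is spanned by `1, X, Y, X * Y`. The determinants enter through the
Cayley–Hamilton theorem and contribute nothing on `SL(2, R)`. -/
def traceRing : Subring R :=
  Subring.closure {trace X, trace Y, trace (X * Y), det X, det Y}

theorem trace_left_mem_traceRing : trace X ∈ traceRing X Y :=
  Subring.subset_closure (by simp)

theorem trace_right_mem_traceRing : trace Y ∈ traceRing X Y :=
  Subring.subset_closure (by simp)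

theorem trace_mul_mem_traceRing : trace (X * Y) ∈ traceRing X Y :=
  Subring.subset_closure (by simp)

theorem det_left_mem_traceRing : det X ∈ traceRing X Y :=
  Subring.subset_closure (by simp)

theorem det_right_mem_traceRing : det Y ∈ traceRing X Y :=
  Subring.subset_closure (by simp)

/-- The module spanned over the trace ring by `1, X, Y, X * Y`, which turns out to be the algebra
generated by `X` and `Y`. -/
def traceSpan : Submodule (traceRing X Y) (Matrix (Fin 2) (Fin 2) R) :=
  Submodule.span (traceRing X Y) {1, X, Y, X * Y}

theorem one_mem_traceSpan : 1 ∈ traceSpan X Y :=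
  Submodule.subset_span (by simp)

theorem left_mem_traceSpan : X ∈ traceSpan X Y :=
  Submodule.subset_span (by simp)

theorem right_mem_traceSpan : Y ∈ traceSpan X Y :=
  Submodule.subset_span (by simp)

theorem left_mul_right_mem_traceSpan : X * Y ∈ traceSpan X Y :=
  Submodule.subset_span (by simp)

variable {X Y}

theorem smul_mem_traceSpan {a : R} {Z : Matrix (Fin 2) (Fin 2) R} (ha : a ∈ traceRing X Y)
    (hZ : Z ∈ traceSpan X Y) : a • Z ∈ traceSpan X Y :=
  (traceSpan X Y).smul_mem ⟨a, ha⟩ hZ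

theorem traceSpan_le {N : Submodule (traceRing X Y) (Matrix (Fin 2) (Fin 2) R)} :
    traceSpan X Y ≤ N ↔ 1 ∈ N ∧ X ∈ N ∧ Y ∈ N ∧ X * Y ∈ N := by
  simp [traceSpan, Submodule.span_le, Set.insert_subset_iff]

theorem left_mul_mem_traceSpan {Z : Matrix (Fin 2) (Fin 2) R} (hZ : Z ∈ traceSpan X Y) :
    X * Z ∈ traceSpan X Y := by
  have htX := trace_left_mem_traceRing X Y
  have hdX := det_left_mem_traceRing X Y
  have hX := left_mem_traceSpan X Y
  have hXY := left_mul_right_mem_traceSpan X Y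
  have hXX : X * X ∈ traceSpan X Y := by
    rw [mul_self_fin_two]
    exact sub_mem (smul_mem_traceSpan htX hX) (smul_mem_traceSpan hdX (one_mem_traceSpan X Y))
  have hXXY : X * (X * Y) ∈ traceSpan X Y := by
    rw [← mul_assoc, mul_self_fin_two, sub_mul, smul_mul_assoc, smul_mul_assoc, one_mul]
    exact sub_mem (smul_mem_traceSpan htX hXY) (smul_mem_traceSpan hdX (right_mem_traceSpan X Y))
  suffices traceSpan X Y ≤ (traceSpan X Y).comap (LinearMap.mulLeft (traceRing X Y) X) from this hZ
  exact traceSpan_le.2 ⟨by simpa using hX, hXX, hXY, hXXY⟩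

theorem right_mul_mem_traceSpan {Z : Matrix (Fin 2) (Fin 2) R} (hZ : Z ∈ traceSpan X Y) :
    Y * Z ∈ traceSpan X Y := by
  have htX := trace_left_mem_traceRing X Y
  have htY := trace_right_mem_traceRing X Y
  have htXY := trace_mul_mem_traceRing X Y
  have hdY := det_right_mem_traceRing X Y
  have h1 := one_mem_traceSpan X Y
  have hX := left_mem_traceSpan X Y
  have hY := right_mem_traceSpan X Y
  have hYX : Y * X ∈ traceSpan X Y := by
    rw [eq_sub_of_add_eq' (mul_add_mul_swap_fin_two X Y)]
    exact sub_mem (add_mem (add_mem (smul_mem_traceSpan htY hX) (smul_mem_traceSpan htX hY))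
      (smul_mem_traceSpan (sub_mem htXY (mul_mem htX htY)) h1)) (left_mul_right_mem_traceSpan X Y)
  have hYY : Y * Y ∈ traceSpan X Y := by
    rw [mul_self_fin_two]
    exact sub_mem (smul_mem_traceSpan htY hY) (smul_mem_traceSpan hdY h1)
  have hYXY : Y * (X * Y) ∈ traceSpan X Y := by
    rw [sandwich_fin_two]
    exact sub_mem (add_mem (smul_mem_traceSpan htXY hY) (smul_mem_traceSpan hdY hX))
      (smul_mem_traceSpan (mul_mem htX hdY) h1)
  suffices traceSpan X Y ≤ (traceSpan X Y).comap (LinearMap.mulLeft (traceRing X Y) Y) from this hZ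
  exact traceSpan_le.2 ⟨by simpa using hY, hYX, hYY, hYXY⟩

theorem mul_mem_traceSpan {Z W : Matrix (Fin 2) (Fin 2) R} (hZ : Z ∈ traceSpan X Y)
    (hW : W ∈ traceSpan X Y) : Z * W ∈ traceSpan X Y := by
  have hXYW : X * Y * W ∈ traceSpan X Y := by
    rw [mul_assoc]
    exact left_mul_mem_traceSpan (right_mul_mem_traceSpan hW)
  suffices traceSpan X Y ≤ (traceSpan X Y).comap (LinearMap.mulRight (traceRing X Y) W) from this hZ
  exact traceSpan_le.2
    ⟨by simpa using hW, left_mul_mem_traceSpan hW, right_mul_mem_traceSpan hW, hXYW⟩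

variable (X Y) in
theorem toSubmodule_adjoin_pair_eq_traceSpan :
    Subalgebra.toSubmodule (Algebra.adjoin (traceRing X Y) {X, Y}) = traceSpan X Y := by
  have hX : X ∈ Algebra.adjoin (traceRing X Y) {X, Y} := Algebra.subset_adjoin (by simp)
  have hY : Y ∈ Algebra.adjoin (traceRing X Y) {X, Y} := Algebra.subset_adjoin (by simp)
  refine le_antisymm ?_ (traceSpan_le.2 ⟨Subalgebra.one_mem _, hX, hY, Subalgebra.mul_mem _ hX hY⟩)
  let B := (traceSpan X Y).toSubalgebra (one_mem_traceSpan X Y)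
    fun _ _ ↦ mul_mem_traceSpan
  suffices Algebra.adjoin (traceRing X Y) {X, Y} ≤ B from this
  exact Algebra.adjoin_le (Set.pair_subset (left_mem_traceSpan X Y) (right_mem_traceSpan X Y))

theorem trace_mem_traceRing_of_mem_adjoin {Z : Matrix (Fin 2) (Fin 2) R}
    (hZ : Z ∈ Algebra.adjoin (traceRing X Y) {X, Y}) : trace Z ∈ traceRing X Y := by
  rw [← Subalgebra.mem_toSubmodule, toSubmodule_adjoin_pair_eq_traceSpan] at hZ
  let T : Submodule (traceRing X Y) R := LinearMap.range (Algebra.linearMap (traceRing X Y) R)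
  have hT {a : R} : a ∈ T ↔ a ∈ traceRing X Y := by
    simp [T, Algebra.algebraMap_ofSubring]
  suffices traceSpan X Y ≤ T.comap (traceLinearMap (Fin 2) (traceRing X Y) R) from hT.1 (this hZ)
  refine traceSpan_le.2 ⟨hT.2 ?_, hT.2 (trace_left_mem_traceRing X Y),
    hT.2 (trace_right_mem_traceRing X Y), hT.2 (trace_mul_mem_traceRing X Y)⟩
  simp [trace_one, ofNat_mem]

end TraceRing

section Words

variable {R : Type*} [CommRing R]

theorem coe_lift_mem_subalgebra {α : Type*} {A : Subring R} (f : α → SL(2, R))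
    (B : Subalgebra A (Matrix (Fin 2) (Fin 2) R)) (htrace : ∀ i, trace (f i).1 ∈ A)
    (hmem : ∀ i, (f i).1 ∈ B) (w : FreeGroup α) : (FreeGroup.lift f w).1 ∈ B := by
  induction w using FreeGroup.induction_on with
  | C1 => simp
  | of i => simpa using hmem i
  | inv_of i _ =>
    rw [map_inv, FreeGroup.lift_apply_of, coe_inv, adjugate_fin_two_eq_trace_smul_one_sub]
    exact sub_mem (B.smul_mem B.one_mem (⟨_, htrace i⟩ : A)) (hmem i)
  | mul _ _ hu hv =>
    rw [map_mul, coe_mul]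
    exact mul_mem hu hv

theorem trace_lift_mem_traceRing (x y : SL(2, R)) (w : FreeGroup (Fin 2)) :
    trace (FreeGroup.lift ![x, y] w).1 ∈ traceRing x.1 y.1 := by
  refine trace_mem_traceRing_of_mem_adjoin (coe_lift_mem_subalgebra _ _ ?_ ?_ w)
  · exact Fin.forall_fin_two.2 ⟨trace_left_mem_traceRing _ _, trace_right_mem_traceRing _ _⟩
  · exact Fin.forall_fin_two.2
      ⟨Algebra.subset_adjoin (by simp), Algebra.subset_adjoin (by simp)⟩

/-- `P` is a trace polynomial of the word `w` at the pair `(x, y)`, that is, it expresses the trace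
of `w(x, y)` through those of `x`, `y` and `xy`. -/
def IsTracePolynomialAt (P : MvPolynomial (Fin 3) ℤ) (w : FreeGroup (Fin 2)) (x y : SL(2, R)) :
    Prop :=
  trace (FreeGroup.lift ![x, y] w).1 =
    MvPolynomial.aeval ![trace x.1, trace y.1, trace (x * y).1] P

theorem exists_isTracePolynomialAt (w : FreeGroup (Fin 2)) (x y : SL(2, R)) :
    ∃ P, IsTracePolynomialAt P w x y := by
  let f : Fin 3 → R := ![trace x.1, trace y.1, trace (x * y).1]
  have hf (i : Fin 3) : f i ∈ (MvPolynomial.aeval (R := ℤ) f).range :=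
    ⟨.X i, MvPolynomial.aeval_X f i⟩
  have hle : traceRing x.1 y.1 ≤ (MvPolynomial.aeval (R := ℤ) f).range.toSubring := by
    simp only [traceRing, det_coe, Subring.closure_le, Set.insert_subset_iff,
      Set.singleton_subset_iff]
    exact ⟨hf 0, hf 1, hf 2, one_mem _, one_mem _⟩
  obtain ⟨P, hP⟩ := hle (trace_lift_mem_traceRing x y w)
  exact ⟨P, hP.symm⟩

theorem IsTracePolynomialAt.map {S : Type*} [CommRing S] {P : MvPolynomial (Fin 3) ℤ}
    {w : FreeGroup (Fin 2)} {x y : SL(2, R)} (h : IsTracePolynomialAt P w x y) (φ : R →+* S) :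
    IsTracePolynomialAt P w (SpecialLinearGroup.map φ x) (SpecialLinearGroup.map φ y) := by
  have htrace (z : SL(2, R)) : trace (SpecialLinearGroup.map φ z).1 = φ (trace z.1) :=
    (AddMonoidHom.map_trace φ z.1).symm
  have hword : FreeGroup.lift ![SpecialLinearGroup.map φ x, SpecialLinearGroup.map φ y] w =
      SpecialLinearGroup.map φ (FreeGroup.lift ![x, y] w) := by
    let g : FreeGroup (Fin 2) →* SL(2, S) :=
      (SpecialLinearGroup.map φ).comp (FreeGroup.lift ![x, y])
    exact (FreeGroup.lift_unique g (by simp [g, Fin.forall_fin_two])).symm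
  let f : Fin 3 → R := ![trace x.1, trace y.1, trace (x * y).1]
  have hf : ![φ (trace x.1), φ (trace y.1), φ (trace (x * y).1)] = fun i ↦ φ (f i) := by
    ext i
    fin_cases i <;> rfl
  rw [IsTracePolynomialAt] at h ⊢
  rw [hword, ← map_mul, htrace, htrace, htrace, htrace, h, hf]
  exact MvPolynomial.comp_aeval_apply (f := f) φ.toIntAlgHom P

end Words

section Families

variable {n ι : Type*} [DecidableEq n] [Fintype n] {R : ι → Type*} [∀ i, CommRing (R i)]

/-- A family of matrices of determinant one over rings `R i`, viewed as a single such matrix over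
the product ring. -/
def piSpecialLinearGroup (x : ∀ i, SpecialLinearGroup n (R i)) :
    SpecialLinearGroup n (∀ i, R i) :=
  ⟨piEquiv.symm fun i ↦ (x i).1, by
    ext i
    exact ((Pi.evalRingHom R i).map_det _).trans (x i).2⟩

theorem map_evalRingHom_piSpecialLinearGroup (x : ∀ i, SpecialLinearGroup n (R i)) (i : ι) :
    SpecialLinearGroup.map (Pi.evalRingHom R i) (piSpecialLinearGroup x) = x i :=
  rfl

theorem exists_forall_isTracePolynomialAt (w : FreeGroup (Fin 2)) (x y : ∀ i, SL(2, R i)) :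
    ∃ P, ∀ i, IsTracePolynomialAt P w (x i) (y i) := by
  obtain ⟨P, hP⟩ :=
    exists_isTracePolynomialAt w (piSpecialLinearGroup x) (piSpecialLinearGroup y)
  refine ⟨P, fun i ↦ ?_⟩
  simpa only [map_evalRingHom_piSpecialLinearGroup] using hP.map (Pi.evalRingHom R i)

end Families

theorem trace_polynomial_exists_general (w : FreeGroup (Fin 2)) :
    ∃ P : MvPolynomial (Fin 3) ℤ, ∀ (R : Type u) [CommRing R] (x y : SL(2, R)),
      trace (FreeGroup.lift ![x, y] w).1 =
        MvPolynomial.aeval ![trace x.1, trace y.1, trace (x * y).1] P := by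
  let R (i : Σ S : CommRingCat.{u}, SL(2, S) × SL(2, S)) : Type u := i.1
  obtain ⟨P, hP⟩ := exists_forall_isTracePolynomialAt (R := R) w (fun i ↦ i.2.1) (fun i ↦ i.2.2)
  exact ⟨P, fun S _ x y ↦ hP ⟨CommRingCat.of S, x, y⟩⟩

/-- for every word `w ∈ F₂` there is a trace polynomial
`P_w ∈ ℤ[s,t,u]` with `tr (w(x,y)) = P_w (tr x, tr y, tr (xy))` for all
`x, y ∈ SL(2,ℂ)`. -/
theorem trace_polynomial_exists (w : FreeGroup (Fin 2)) :
    ∃ P : MvPolynomial (Fin 3) ℤ,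
      ∀ x y : SL2C,
        tr2 (wordEval w x y) =
          MvPolynomial.aeval ![tr2 x, tr2 y, tr2 (x * y)] P := by
  obtain ⟨P, hP⟩ := trace_polynomial_exists_general w
  exact ⟨P, hP ℂ⟩
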